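/- For every k ∈ ℤ with k ≠ n, the constant term Γ_k^{(0)} of Γ_k(t) is a polynomial in the parameters a_{k−N}, a_{k−N+1}, …, a_{k+N}, a_+, a_− only (with coefficients involving only k, ε and u_1, …, u_N; here a_{n±1} = ∓1 and a_n is absent from the list), i.e., Γ_k^{(0)} lies in the subring of K generated over ℚ(u_1,…,u_N) by a_{k−N}, …, a_{k+N}, a_+ and a_−. -/

import Mathlib

/-!
Common definitions: the matrices `L₁`, `L₂` of the Toeplitz lattice, their powers,
the recursion polynomials `Γ_k` (here `GamA`), `Γ̃_k` (here `GamB`) and their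
self-dual version (`GamSD`), together with the notion of formal Laurent
solutions of the (self-dual) Toeplitz lattice.
-/

noncomputable section

namespace SingConf

variable {A : Type*} [CommRing A]

/-- The entry `(L₁)_{ij} = -x_i y_{j-1} + δ_{i+1,j}` (for `j - i ≤ 1`, zero otherwise). -/
def L1e (x y : ℤ → A) (i j : ℤ) : A :=
  if j ≤ i + 1 then -(x i * y (j - 1)) + (if i + 1 = j then 1 else 0) else 0

/-- The entry `(L₂)_{ij} = -y_j x_{i-1} + δ_{j+1,i}` (for `j - i ≥ -1`, zero otherwise). -/
def L2e (x y : ℤ → A) (i j : ℤ) : A :=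
  if i ≤ j + 1 then -(y j * x (i - 1)) + (if j + 1 = i then 1 else 0) else 0

/-- The entry `(L₁^s)_{ij}`; the matrix `L₁` has upper bandwidth 1, so each entry of a
power is a finite sum. -/
def L1pow (x y : ℤ → A) : ℕ → ℤ → ℤ → A
  | 0 => fun i j => if i = j then 1 else 0
  | s + 1 => fun i j => ∑ l ∈ Finset.Icc (j - 1) (i + (s : ℤ)), L1pow x y s i l * L1e x y l j

/-- The entry `(L₂^s)_{ij}`. -/
def L2pow (x y : ℤ → A) : ℕ → ℤ → ℤ → A
  | 0 => fun i j => if i = j then 1 else 0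
  | s + 1 => fun i j => ∑ l ∈ Finset.Icc (i - (s : ℤ)) (j + 1), L2pow x y s i l * L2e x y l j

/-- The recursion polynomial
`Γ_k(x,y;u) = (v_k/y_k)(-(L₁P₁'(L₁))_{k+1,k+1} - (L₂P₂'(L₂))_{k,k}
              + (P₁'(L₁))_{k+1,k} + (P₂'(L₂))_{k,k+1}) + k x_k`
where `P₁(λ) = ∑_{i=1}^N u_i λ^i/i`, `P₂(λ) = ∑_{i=1}^N u_{-i} λ^i/i`, `v_k = 1 - x_k y_k`.
The apparent denominator `y_k` cancels, thanks to the identities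
`(L₁^{i-1})_{k+1,k} - (L₁^i)_{k+1,k+1} = y_k ∑_{l} x_l (L₁^{i-1})_{k+1,l}` and
`(L₂^{i-1})_{k,k+1} - (L₂^i)_{k,k} = y_k ∑_{l} x_{l-1} (L₂^{i-1})_{k,l}`,
which is how the cancellation-free expression below is obtained. -/
def GamA (N : ℕ) (u : ℤ → A) (x y : ℤ → A) (k : ℤ) : A :=
  (1 - x k * y k) *
    ((∑ i ∈ Finset.Icc 1 N, u (i : ℤ) *
        ∑ l ∈ Finset.Icc k (k + (i : ℤ)), x l * L1pow x y (i - 1) (k + 1) l) +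
      ∑ i ∈ Finset.Icc 1 N, u (-(i : ℤ)) *
        ∑ l ∈ Finset.Icc (k - (i : ℤ) + 1) (k + 1), x (l - 1) * L2pow x y (i - 1) k l) +
  (k : A) * x k

/-- The recursion polynomial
`Γ̃_k(x,y;u) = (v_k/x_k)(-(L₁P₁'(L₁))_{k,k} - (L₂P₂'(L₂))_{k+1,k+1}
              + (P₁'(L₁))_{k+1,k} + (P₂'(L₂))_{k,k+1}) + k y_k`,
written in cancellation-free form using
`(L₁^{i-1})_{k+1,k} - (L₁^i)_{k,k} = x_k ∑_{l} y_{l-1} (L₁^{i-1})_{l,k}` and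
`(L₂^{i-1})_{k,k+1} - (L₂^i)_{k+1,k+1} = x_k ∑_{l} y_l (L₂^{i-1})_{l,k+1}`. -/
def GamB (N : ℕ) (u : ℤ → A) (x y : ℤ → A) (k : ℤ) : A :=
  (1 - x k * y k) *
    ((∑ i ∈ Finset.Icc 1 N, u (i : ℤ) *
        ∑ l ∈ Finset.Icc (k - (i : ℤ) + 1) (k + 1), y (l - 1) * L1pow x y (i - 1) l k) +
      ∑ i ∈ Finset.Icc 1 N, u (-(i : ℤ)) *
        ∑ l ∈ Finset.Icc k (k + (i : ℤ)), y l * L2pow x y (i - 1) l (k + 1)) +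
  (k : A) * y k

/-- The self-dual recursion polynomial
`Γ_k(x;u) = (v_k/x_k)(2(P'(L))_{k+1,k} - (LP'(L))_{k+1,k+1} - (LP'(L))_{k,k}) + k x_k`
(where `L = L₁` with `y = x`, `v_k = 1 - x_k²`), in cancellation-free form. -/
def GamSD (N : ℕ) (u : ℕ → A) (x : ℤ → A) (k : ℤ) : A :=
  (1 - x k * x k) *
    (∑ i ∈ Finset.Icc 1 N, u i *
      ((∑ l ∈ Finset.Icc k (k + (i : ℤ)), x l * L1pow x x (i - 1) (k + 1) l) +
        ∑ l ∈ Finset.Icc (k - (i : ℤ) + 1) (k + 1), x (l - 1) * L1pow x x (i - 1) l k)) +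
  (k : A) * x k

variable {K : Type*} [Field K]

/-- `f(t) = O(t^m)` for a formal Laurent series. -/
def BigO (f : LaurentSeries K) (m : ℤ) : Prop := ∀ i < m, f.coeff i = 0

/-- A family `x(t) = (x_k(t))_{k ∈ ℤ}` of formal Laurent series is a solution of the first
vector field of the self-dual Toeplitz lattice: `dx_k/dt = (1 - x_k²)(x_{k+1} - x_{k-1})`;
stated coefficientwise (the coefficient of `t^m` in `dx_k/dt` is `(m+1)·x_k^{(m+1)}`). -/
def IsSolSD (x : ℤ → LaurentSeries K) : Prop :=
  ∀ k m : ℤ, ((m + 1 : ℤ) : K) * (x k).coeff (m + 1) =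
    ((1 - x k * x k) * (x (k + 1) - x (k - 1))).coeff m

/-- A family `(x_k(t), y_k(t))_{k ∈ ℤ}` of formal Laurent series is a solution of the first
Toeplitz vector field: `dx_k/dt = (1 - x_k y_k)(x_{k+1} - x_{k-1})`,
`dy_k/dt = (1 - x_k y_k)(y_{k+1} - y_{k-1})`. -/
def IsSolT (x y : ℤ → LaurentSeries K) : Prop :=
  ∀ k m : ℤ,
    ((m + 1 : ℤ) : K) * (x k).coeff (m + 1) =
      ((1 - x k * y k) * (x (k + 1) - x (k - 1))).coeff m ∧
    ((m + 1 : ℤ) : K) * (y k).coeff (m + 1) =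
      ((1 - x k * y k) * (y (k + 1) - y (k - 1))).coeff m

end SingConf

namespace SingConf

/-- Indices `k` with `|k - n| ≥ 2`. -/
abbrev OffSD (n : ℤ) := {k : ℤ // k ≤ n - 2 ∨ n + 2 ≤ k}

/-- Indeterminates: the `a_k` (`|k - n| ≥ 2`), `a₊, a₋` (a `Bool`), and `u_1, …, u_N`. -/
abbrev IdxSD (n : ℤ) (N : ℕ) := OffSD n ⊕ (Bool ⊕ {i : ℕ // 1 ≤ i ∧ i ≤ N})

/-- The field of rational functions over `ℚ` in the indeterminates
`a_k (|k - n| ≥ 2), a₊, a₋, u_1, …, u_N`. -/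
abbrev KSD (n : ℤ) (N : ℕ) := FractionRing (MvPolynomial (IdxSD n N) ℚ)

/-- The indeterminate `a₊`. -/
def apSD (n : ℤ) (N : ℕ) : KSD n N :=
  algebraMap (MvPolynomial (IdxSD n N) ℚ) _ (MvPolynomial.X (Sum.inr (Sum.inl true)))

/-- The indeterminate `a₋`. -/
def amSD (n : ℤ) (N : ℕ) : KSD n N :=
  algebraMap (MvPolynomial (IdxSD n N) ℚ) _ (MvPolynomial.X (Sum.inr (Sum.inl false)))

/-- The parameters `a_k`, with the conventions `a_{n-1} = 1`, `a_{n+1} = -1`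
(and the junk value `a_n = 0`; `a_n` does not exist). -/
def avSD (n : ℤ) (N : ℕ) : ℤ → KSD n N := fun k =>
  if k = n + 1 then -1
  else if k = n - 1 then 1
  else if h : k ≤ n - 2 ∨ n + 2 ≤ k then
    algebraMap (MvPolynomial (IdxSD n N) ℚ) _ (MvPolynomial.X (Sum.inl ⟨k, h⟩))
  else 0

/-- The indeterminates `u_1, …, u_N` (with junk value `0` out of range). -/
def uvSD (n : ℤ) (N : ℕ) : ℕ → KSD n N := fun i =>
  if h : 1 ≤ i ∧ i ≤ N then
    algebraMap (MvPolynomial (IdxSD n N) ℚ) _ (MvPolynomial.X (Sum.inr (Sum.inr ⟨i, h⟩)))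
  else 0

/-- The time-dependent parameters `u(t) = (u_1 + t, u_2, …, u_N)`. -/
def utSD (n : ℤ) (N : ℕ) : ℕ → LaurentSeries (KSD n N) := fun i =>
  HahnSeries.C (uvSD n N i) + (if i = 1 then HahnSeries.single (1 : ℤ) 1 else 0)

/-- `x(t)` is *the* formal Laurent solution over `KSD n N` of the self-dual Toeplitz lattice
such that only `x_n(t)` has a pole and `x_n(t) = -ε/(2t) + O(1)`,
`x_{n±1}(t) = ∓ε + 4a_± t + O(t²)`, `x_k(t) = ε a_k + O(t)` for `|k - n| ≥ 2`. -/
def IsTheSDSol (n : ℤ) (N : ℕ) (ε : KSD n N) (x : ℤ → LaurentSeries (KSD n N)) : Prop :=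
  IsSolSD x ∧ (∀ k, k ≠ n → BigO (x k) 0) ∧ BigO (x n) (-1) ∧
  (x n).coeff (-1) = -ε / 2 ∧
  (x (n + 1)).coeff 0 = -ε ∧ (x (n - 1)).coeff 0 = ε ∧
  (x (n + 1)).coeff 1 = 4 * ε * apSD n N ∧ (x (n - 1)).coeff 1 = 4 * ε * amSD n N ∧
  (∀ k, 2 ≤ |k - n| → (x k).coeff 0 = ε * avSD n N k)

end SingConf

namespace SingConf

section aux
variable {A : Type*} [CommRing A]

theorem L1pow_band (x : ℤ → A) (s : ℕ) (i j : ℤ) (h : i + s < j) : L1pow x x s i j = 0 := by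
  cases s with
  | zero =>
    simp only [L1pow]
    rw [if_neg]
    simp at h
    omega
  | succ s =>
    simp only [L1pow]
    rw [Finset.Icc_eq_empty]
    · simp
    · push_cast at h
      omega

theorem L1e_local (x y : ℤ → A) (i j : ℤ) (h1 : x i = y i) (h2 : x (j - 1) = y (j - 1)) :
    L1e x x i j = L1e y y i j := by
  simp only [L1e, h1, h2]

theorem L1pow_local (x y : ℤ → A) (s : ℕ) : ∀ (i j : ℤ),
    (∀ m, j - s ≤ m → m ≤ i + s - 1 → x m = y m) → L1pow x x s i j = L1pow y y s i j := by
  induction s with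
  | zero => intro i j _; simp only [L1pow]
  | succ s ih =>
    intro i j h
    simp only [L1pow]
    apply Finset.sum_congr rfl
    intro l hl
    rw [Finset.mem_Icc] at hl
    push_cast at h
    rw [ih i l (fun m h1 h2 => h m (by omega) (by omega)),
      L1e_local x y l j (h l (by omega) (by omega)) (h (j - 1) (by omega) (by omega))]

theorem L1pow_succ_left (x : ℤ → A) (s : ℕ) : ∀ (i j : ℤ),
    L1pow x x (s + 1) i j =
      ∑ l ∈ Finset.Icc (j - (s : ℤ)) (i + 1), L1e x x i l * L1pow x x s l j := by
  induction s with
  | zero =>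
    intro i j
    simp only [L1pow, Nat.cast_zero, add_zero, sub_zero, ite_mul, mul_ite, one_mul, zero_mul,
      mul_one, mul_zero]
    rw [Finset.sum_ite_eq, Finset.sum_ite_eq']
    simp only [Finset.mem_Icc, le_refl, and_true, true_and]
    by_cases h : j - 1 ≤ i
    · rw [if_pos h, if_pos (by omega)]
    · rw [if_neg h, if_neg (by omega)]
  | succ s ih =>
    intro i j
    rw [L1pow]
    have : ∀ m, L1pow x x (s+1) i m * L1e x x m j =
        ∑ l ∈ Finset.Icc (m - (s : ℤ)) (i + 1), L1e x x i l * (L1pow x x s l m * L1e x x m j) := by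
      intro m
      rw [ih, Finset.sum_mul]
      exact Finset.sum_congr rfl fun _ _ => mul_assoc _ _ _
    simp only [this]
    have h2 : ∀ l, L1e x x i l * L1pow x x (s+1) l j =
        ∑ m ∈ Finset.Icc (j - 1) (l + (s : ℤ)), L1e x x i l * (L1pow x x s l m * L1e x x m j) := by
      intro l
      rw [← Finset.mul_sum]
      rfl
    simp only [h2]
    apply Finset.sum_comm'
    intro a b
    simp only [Finset.mem_Icc]
    push_cast
    omega

theorem L1e_refl (x : ℤ → A) (i j : ℤ) :
    L1e x x i j = L1e (fun m => x (-m)) (fun m => x (-m)) (1 - j) (1 - i) := by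
  simp only [L1e]
  have e1 : -(1 - j) = j - 1 := by ring
  have e2 : -(1 - i - 1) = i := by ring
  rw [e1, e2, mul_comm (x i)]
  have a1 : (j ≤ i + 1) ↔ (1 - i ≤ 1 - j + 1) := by omega
  have a2 : (i + 1 = j) ↔ (1 - j + 1 = 1 - i) := by omega
  simp only [a1, a2]

theorem L1pow_refl (x : ℤ → A) (s : ℕ) : ∀ (i j : ℤ),
    L1pow x x s i j = L1pow (fun m => x (-m)) (fun m => x (-m)) s (1 - j) (1 - i) := by
  induction s with
  | zero =>
    intro i j
    simp only [L1pow]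
    have a2 : (i = j) ↔ (1 - j = 1 - i) := by omega
    simp only [a2]
  | succ s ih =>
    intro i j
    rw [L1pow_succ_left, L1pow]
    refine Finset.sum_bij' (fun l _ => 1 - l) (fun l _ => 1 - l) ?_ ?_ ?_ ?_ ?_
    · intro a ha
      simp only [Finset.mem_Icc] at *
      omega
    · intro a ha
      simp only [Finset.mem_Icc] at *
      omega
    · intro a ha
      ring
    · intro a ha
      ring
    · intro a ha
      rw [ih, L1e_refl, mul_comm]

/-- tail sums -/
def Tl (x r : ℤ → A) (j M : ℤ) : A := ∑ l ∈ Finset.Icc j M, x l * r l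

theorem Tl_step (x r : ℤ → A) (j M : ℤ) (hr : ∀ l, M < l → r l = 0) :
    Tl x r j M = x j * r j + Tl x r (j + 1) M := by
  unfold Tl
  by_cases h : j ≤ M
  · rw [← Finset.add_sum_Ioc_eq_sum_Icc h]
    have : Finset.Ioc j M = Finset.Icc (j + 1) M := by
      ext a; simp only [Finset.mem_Icc, Finset.mem_Ioc]; omega
    rw [this]
  · rw [Finset.Icc_eq_empty (by omega), Finset.Icc_eq_empty (by omega), hr j (by omega)]
    simp

theorem L1pow_succ_T (x : ℤ → A) (s : ℕ) (i j : ℤ) :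
    L1pow x x (s + 1) i j = L1pow x x s i (j - 1)
      - x (j - 1) * Tl x (L1pow x x s i) (j - 1) (i + s) := by
  simp only [L1pow]
  have : ∀ l ∈ Finset.Icc (j - 1) (i + (s : ℤ)), L1pow x x s i l * L1e x x l j =
      (if j - 1 = l then L1pow x x s i l else 0) - x (j - 1) * (x l * L1pow x x s i l) := by
    intro l hl
    rw [Finset.mem_Icc] at hl
    rw [L1e, if_pos (by omega)]
    by_cases h : j - 1 = l
    · rw [if_pos h, if_pos (by omega)]; ring
    · rw [if_neg h, if_neg (by omega)]; ring
  rw [Finset.sum_congr rfl this, Finset.sum_sub_distrib, ← Finset.mul_sum, Finset.sum_ite_eq]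
  unfold Tl
  congr 1
  split_ifs with h
  · rfl
  · rw [Finset.mem_Icc] at h
    rw [L1pow_band]
    omega

/-- admissible rows -/
structure RowGood (G : Subring A) (n : ℤ) (x r : ℤ → A) : Prop where
  h1 : ∀ l, l ≠ n + 1 → r l ∈ G
  h2 : x (n + 1) * r (n + 1) + x n * r n ∈ G
  h3 : (1 - x (n + 1) * x (n + 1)) * r (n + 1) ∈ G

theorem Tl_good (G : Subring A) (n : ℤ) (x r : ℤ → A) (hx : ∀ l, l ≠ n → x l ∈ G)
    (hr : RowGood G n x r) (M : ℤ) (hM : ∀ l, M < l → r l = 0) (j : ℤ) :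
    (j ≠ n + 1 → Tl x r j M ∈ G) ∧ (j = n + 1 → Tl x r j M - x j * r j ∈ G) := by
  have base : ∀ j, M < j → (j ≠ n + 1 → Tl x r j M ∈ G) ∧
      (j = n + 1 → Tl x r j M - x j * r j ∈ G) := by
    intro j hj
    have : Tl x r j M = 0 := by
      unfold Tl
      rw [Finset.Icc_eq_empty (by omega)]; simp
    rw [this, hM j hj]
    simp [G.zero_mem]
  by_cases hj : M < j
  · exact base j hj
  push Not at hj
  have hj' : j ≤ M + 1 := by omega
  clear hj
  induction j, hj' using Int.le_induction_down with
  | base => exact base _ (by omega)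
  | pred j hj ih =>
    have hs := Tl_step x r (j - 1) M hM
    rw [sub_add_cancel] at hs
    constructor
    · intro hne
      by_cases h : j - 1 = n
      · have hj : j = n + 1 := by omega
        have := G.add_mem (ih.2 hj) hr.h2
        rw [hs, h]
        convert this using 1
        rw [hj]; ring
      · rw [hs]
        exact G.add_mem (G.mul_mem (hx _ h) (hr.h1 _ hne)) (ih.1 (by omega))
    · intro he
      rw [hs, add_sub_cancel_left]
      exact ih.1 (by omega)

theorem row_good (G : Subring A) (n : ℤ) (x : ℤ → A) (hx : ∀ l, l ≠ n → x l ∈ G)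
    (hp : x n * (1 - x (n + 1) * x (n + 1)) ∈ G)
    (hm : x n * (1 - x (n - 1) * x (n - 1)) ∈ G)
    (hs : x n * (x (n + 1) + x (n - 1)) ∈ G)
    (w : A) (hw : w ∈ G) (i : ℤ) (hi : i ≠ n + 1) (hi' : i = n → x n * w ∈ G) (s : ℕ) :
    RowGood G n x (fun l => w * L1pow x x s i l) := by
  induction s with
  | zero =>
    simp only [L1pow]
    refine ⟨?_, ?_, ?_⟩
    · intro l _
      split_ifs
      · simpa using hw
      · simp
    · rw [if_neg hi]
      by_cases h : i = n
      · simpa [h] using hi' h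
      · simp [h]
    · rw [if_neg hi]; simp
  | succ s ih =>
    set r := fun l => w * L1pow x x s i l with hrdef
    have hT := Tl_good G n x r hx ih (i + s)
      (fun l hl => by simp only [hrdef]; rw [L1pow_band _ _ _ _ hl, mul_zero])
    have hst := fun j => Tl_step x r j (i + s)
      (fun l hl => by simp only [hrdef]; rw [L1pow_band _ _ _ _ hl, mul_zero])
    have hrec : ∀ j, w * L1pow x x (s + 1) i j = r (j - 1) - x (j - 1) * Tl x r (j - 1) (i + s) := by
      intro j
      have : Tl x r (j - 1) (i + s) = w * Tl x (L1pow x x s i) (j - 1) (i + s) := by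
        unfold Tl
        rw [Finset.mul_sum]
        exact Finset.sum_congr rfl fun _ _ => by simp only [hrdef]; ring
      rw [L1pow_succ_T, this]; simp only [hrdef]; ring
    clear_value r
    have e1 : n + 1 - 1 = n := by ring
    refine ⟨?_, ?_, ?_⟩
    · intro l hl
      simp only [hrec]
      by_cases h : l - 1 = n + 1
      · have h1 := (hT (l - 1)).2 h
        rw [h] at h1 ⊢
        have h4 := G.mul_mem (hx (n + 1) (by omega)) h1
        have := G.sub_mem ih.h3 h4
        convert this using 1
        ring
      · exact G.sub_mem (ih.h1 _ h) (G.mul_mem (hx _ (by omega)) ((hT _).1 h))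
    · simp only [hrec]
      rw [e1]
      have s1 := hst (n - 1)
      rw [sub_add_cancel] at s1
      rw [s1]
      have t1 := G.mul_mem (hx (n + 1) (by omega)) (ih.h1 n (by omega))
      have t2 := G.mul_mem hs ((hT n).1 (by omega))
      have t3 := G.mul_mem hm (ih.h1 (n - 1) (by omega))
      convert G.add_mem (G.sub_mem t1 t2) t3 using 1
      ring
    · simp only [hrec]
      rw [e1]
      have hv : (1 - x (n + 1) * x (n + 1)) ∈ G :=
        G.sub_mem G.one_mem (G.mul_mem (hx _ (by omega)) (hx _ (by omega)))
      have t1 := G.mul_mem hv (ih.h1 n (by omega))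
      have t2 := G.mul_mem hp ((hT n).1 (by omega))
      convert G.sub_mem t1 t2 using 1
      ring

theorem first_sum (G : Subring A) (n : ℤ) (x : ℤ → A) (hx : ∀ l, l ≠ n → x l ∈ G)
    (hp : x n * (1 - x (n + 1) * x (n + 1)) ∈ G)
    (hm : x n * (1 - x (n - 1) * x (n - 1)) ∈ G)
    (hs : x n * (x (n + 1) + x (n - 1)) ∈ G) (k : ℤ) (hk : k ≠ n) (s : ℕ) :
    (1 - x k * x k) * Tl x (L1pow x x s (k + 1)) k (k + 1 + s) ∈ G := by
  have hv : (1 - x k * x k) ∈ G :=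
    G.sub_mem G.one_mem (G.mul_mem (hx _ hk) (hx _ hk))
  by_cases h : k = n + 1
  · have hr := row_good G n x hx hp hm hs 1 G.one_mem (k + 1) (by omega) (by omega) s
    simp only [one_mul] at hr
    have hT := (Tl_good G n x _ hx hr (k + 1 + s) (fun l hl => L1pow_band _ _ _ _ hl) k).2 h
    have h3 := hr.h3
    rw [← h] at h3
    convert G.add_mem (G.mul_mem hv hT) (G.mul_mem (hx k hk) h3) using 1
    ring
  · have hr := row_good G n x hx hp hm hs _ hv (k + 1) (by omega)
      (by intro h; have : k = n - 1 := by omega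
          rw [this]; exact hm) s
    have hT := (Tl_good G n x _ hx hr (k + 1 + s)
      (fun l hl => by rw [L1pow_band _ _ _ _ hl, mul_zero]) k).1 h
    convert hT using 1
    unfold Tl
    rw [Finset.mul_sum]
    exact Finset.sum_congr rfl fun _ _ => by ring

theorem second_sum (x : ℤ → A) (k : ℤ) (s : ℕ) :
    ∑ l ∈ Finset.Icc (k - ((s + 1 : ℕ) : ℤ) + 1) (k + 1), x (l - 1) * L1pow x x s l k =
    Tl (fun m => x (-m)) (L1pow (fun m => x (-m)) (fun m => x (-m)) s (-k + 1)) (-k)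
      (-k + 1 + s) := by
  unfold Tl
  refine Finset.sum_bij' (fun l _ => 1 - l) (fun l _ => 1 - l) ?_ ?_ ?_ ?_ ?_
  · intro a ha
    simp only [Finset.mem_Icc] at *
    push_cast at ha
    omega
  · intro a ha
    simp only [Finset.mem_Icc] at *
    push_cast
    omega
  · intro a ha
    ring
  · intro a ha
    ring
  · intro a ha
    rw [L1pow_refl]
    congr 2
    · ring
    · ring

theorem Gam_good (G : Subring A) (n : ℤ) (x : ℤ → A) (hx : ∀ l, l ≠ n → x l ∈ G)
    (hp : x n * (1 - x (n + 1) * x (n + 1)) ∈ G)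
    (hm : x n * (1 - x (n - 1) * x (n - 1)) ∈ G)
    (hs : x n * (x (n + 1) + x (n - 1)) ∈ G) (k : ℤ) (hk : k ≠ n) (N : ℕ) (u : ℕ → A)
    (hu : ∀ i, u i ∈ G) : GamSD N u x k ∈ G := by
  unfold GamSD
  refine G.add_mem ?_ (G.mul_mem (intCast_mem G k) (hx k hk))
  rw [Finset.mul_sum]
  refine G.sum_mem fun i hi => ?_
  rw [Finset.mem_Icc] at hi
  obtain ⟨s, rfl⟩ : ∃ s, i = s + 1 := ⟨i - 1, by omega⟩
  rw [Nat.add_sub_cancel, second_sum]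
  have a := first_sum G n x hx hp hm hs k hk s
  have e1 : -(-n + 1) = n - 1 := by ring
  have e2 : -(-n - 1) = n + 1 := by ring
  have b := first_sum G (-n) (fun m => x (-m)) (fun l hl => hx _ (by omega))
    (by simpa only [e1, neg_neg] using hm) (by simpa only [e2, neg_neg] using hp)
    (by simpa only [e1, e2, neg_neg, add_comm] using hs) (-k) (by omega) s
  simp only [neg_neg] at b
  have e3 : k + ((s + 1 : ℕ) : ℤ) = k + 1 + s := by push_cast; ring
  rw [e3]
  convert G.mul_mem (hu (s + 1)) (G.add_mem a b) using 1
  unfold Tl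
  ring

theorem Gam_local (x y : ℤ → A) (k : ℤ) (N : ℕ) (u : ℕ → A)
    (h : ∀ j, k - N ≤ j → j ≤ k + N → x j = y j) : GamSD N u x k = GamSD N u y k := by
  unfold GamSD
  rw [h k (by omega) (by omega)]
  congr 2
  apply Finset.sum_congr rfl
  intro i hi
  rw [Finset.mem_Icc] at hi
  congr 2
  · apply Finset.sum_congr rfl
    intro l hl
    rw [Finset.mem_Icc] at hl
    rw [h l (by omega) (by omega),
      L1pow_local x y (i - 1) (k + 1) l (fun m _ _ => h m (by omega) (by omega))]
  · apply Finset.sum_congr rfl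
    intro l hl
    rw [Finset.mem_Icc] at hl
    rw [h (l - 1) (by omega) (by omega),
      L1pow_local x y (i - 1) l k (fun m _ _ => h m (by omega) (by omega))]

end aux

section laurent
variable {K : Type*} [Field K]

/-- regular series with constant term in `R` -/
def GR (R : Subring K) : Subring (LaurentSeries K) :=
  (R.comap (PowerSeries.constantCoeff (R := K))).map (HahnSeries.ofPowerSeries ℤ K)

theorem GR_coeff (R : Subring K) (f : LaurentSeries K) (hf : f ∈ GR R) : f.coeff 0 ∈ R := by
  obtain ⟨p, hp, rfl⟩ := hf
  have := HahnSeries.ofPowerSeries_apply_coeff (Γ := ℤ) p 0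
  simp only [Nat.cast_zero] at this
  rw [this]
  simpa using hp

theorem mem_GR (R : Subring K) (f : LaurentSeries K) (h : ∀ i < 0, f.coeff i = 0)
    (h0 : f.coeff 0 ∈ R) : f ∈ GR R := by
  refine ⟨PowerSeries.mk fun m => f.coeff (m : ℤ), ?_, ?_⟩
  · simpa using h0
  · ext m
    by_cases hm : 0 ≤ m
    · obtain ⟨a, rfl⟩ := Int.eq_ofNat_of_zero_le hm
      rw [HahnSeries.ofPowerSeries_apply_coeff]
      simp
    · rw [h m (by omega)]
      rw [HahnSeries.ofPowerSeries_apply]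
      apply HahnSeries.embDomain_notin_range
      rintro ⟨a, ha⟩
      simp at ha
      omega

end laurent
end SingConf

open SingConf MvPolynomial

/-- For every `k ≠ n`, the constant term `Γ_k^{(0)}` of
`Γ_k(t) = Γ_k(x(t); u(t))` lies in the subring of `K = KSD n N` generated over
`ℚ(u_1, …, u_N)` by `a_{k-N}, …, a_{k+N}, a₊, a₋` (with the conventions `a_{n±1} = ∓1`,
`a_n` absent). -/
theorem statement9 (n : ℤ) (N : ℕ) (hN : 1 ≤ N)
    (ε : KSD n N) (hε : ε = 1 ∨ ε = -1)
    (x : ℤ → LaurentSeries (KSD n N)) (hx : IsTheSDSol n N ε x) :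
    ∀ k : ℤ, k ≠ n →
      (GamSD N (utSD n N) x k).coeff 0 ∈
        Subring.closure
          ((Subfield.closure {c : KSD n N | ∃ i : ℕ, 1 ≤ i ∧ i ≤ N ∧ c = uvSD n N i} :
              Subfield (KSD n N)) ∪
            {c : KSD n N | ∃ i : ℤ, k - N ≤ i ∧ i ≤ k + N ∧ c = avSD n N i} ∪
            {apSD n N, amSD n N}) := by
  intro k hk
  obtain ⟨-, hreg, hpole, hres, hp0, hm0, hp1, hm1, hoff⟩ := hx
  set F : Subfield (KSD n N) :=
    Subfield.closure {c : KSD n N | ∃ i : ℕ, 1 ≤ i ∧ i ≤ N ∧ c = uvSD n N i} with hF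
  set R : Subring (KSD n N) := Subring.closure ((F : Set (KSD n N)) ∪
      {c : KSD n N | ∃ i : ℤ, k - N ≤ i ∧ i ≤ k + N ∧ c = avSD n N i} ∪
      {apSD n N, amSD n N}) with hR
  have hFR : ∀ c, c ∈ F → c ∈ R := fun c hc => Subring.subset_closure (Or.inl (Or.inl hc))
  have haR : ∀ i : ℤ, k - N ≤ i → i ≤ k + N → avSD n N i ∈ R := fun i h1 h2 =>
    Subring.subset_closure (Or.inl (Or.inr ⟨i, h1, h2, rfl⟩))
  have hapR : apSD n N ∈ R := Subring.subset_closure (Or.inr (Or.inl rfl))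
  have hamR : amSD n N ∈ R := Subring.subset_closure (Or.inr (Or.inr rfl))
  have hεF : ε ∈ F := by
    rcases hε with h | h <;> rw [h]
    · exact F.one_mem
    · exact F.neg_mem F.one_mem
  have hεε : ε * ε = 1 := by rcases hε with h | h <;> rw [h] <;> ring
  have hεR : ε ∈ R := hFR _ hεF
  have h4R : (4 : KSD n N) ∈ R := by exact_mod_cast natCast_mem R 4
  have h2F : (2 : KSD n N) ∈ F := by exact_mod_cast natCast_mem F 2
  have hqR : -ε / 2 ∈ R := hFR _ (F.div_mem (F.neg_mem hεF) h2F)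
  set y : ℤ → LaurentSeries (KSD n N) := fun j =>
    if (k - N ≤ j ∧ j ≤ k + N) ∨ (n - 1 ≤ j ∧ j ≤ n + 1) then x j else 0 with hy
  have hyn : y n = x n := by simp only [hy]; rw [if_pos]; right; omega
  have hyp : y (n + 1) = x (n + 1) := by simp only [hy]; rw [if_pos]; right; omega
  have hym : y (n - 1) = x (n - 1) := by simp only [hy]; rw [if_pos]; right; omega
  have hC : ∀ c ∈ R, (HahnSeries.C c : LaurentSeries (KSD n N)) ∈ GR R := by
    intro c hc
    refine mem_GR R _ (fun i hi => ?_) ?_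
    · rw [HahnSeries.C_apply, HahnSeries.coeff_single_of_ne (by omega)]
    · rw [HahnSeries.C_apply, HahnSeries.coeff_single_same]; exact hc
  have ht : (HahnSeries.single (1 : ℤ) (1 : KSD n N) : LaurentSeries (KSD n N)) ∈ GR R := by
    refine mem_GR R _ (fun i hi => ?_) ?_
    · rw [HahnSeries.coeff_single_of_ne (by omega)]
    · rw [HahnSeries.coeff_single_of_ne (by omega)]; exact R.zero_mem
  rw [Gam_local x y k N _ (fun j h1 h2 => by
    simp only [hy]; rw [if_pos (Or.inl ⟨h1, h2⟩)])]
  apply GR_coeff R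
  -- expansions near the pole
  set t : LaurentSeries (KSD n N) := HahnSeries.single (1 : ℤ) (1 : KSD n N) with htd
  set t' : LaurentSeries (KSD n N) := HahnSeries.single (-1 : ℤ) (1 : KSD n N) with htd'
  have htt : t' * t = 1 := by
    rw [htd, htd', HahnSeries.single_mul_single]
    simp
  have hQ : t * x n ∈ GR R := by
    have hc : ∀ i : ℤ, (t * x n).coeff i = (x n).coeff (i - 1) := by
      intro i
      rw [htd, HahnSeries.coeff_single_mul, one_mul]
    refine mem_GR R _ (fun i hi => ?_) ?_
    · rw [hc]; exact hpole _ (by omega)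
    · rw [hc, zero_sub, hres]; exact hqR
  have hY : ∀ (j : ℤ) (c : KSD n N), j ≠ n → (x j).coeff 0 = c → (x j).coeff 1 ∈ R →
      t' * (x j - HahnSeries.C c) ∈ GR R := by
    intro j c hj h0 h1
    have hc : ∀ i : ℤ, (t' * (x j - HahnSeries.C c)).coeff i =
        (x j).coeff (i + 1) - (HahnSeries.C c : LaurentSeries (KSD n N)).coeff (i + 1) := by
      intro i
      rw [htd', HahnSeries.coeff_single_mul, one_mul, sub_neg_eq_add, HahnSeries.coeff_sub]
    refine mem_GR R _ (fun i hi => ?_) ?_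
    · rw [hc, HahnSeries.C_apply]
      by_cases h : i = -1
      · subst h
        simp [h0]
      · rw [hreg j hj _ (by omega), HahnSeries.coeff_single_of_ne (by omega), sub_zero]
    · rw [hc, HahnSeries.C_apply, HahnSeries.coeff_single_of_ne (by omega), zero_add, sub_zero]
      exact h1
  have hYp := hY (n + 1) (-ε) (by omega) hp0
    (by rw [hp1]; exact R.mul_mem (R.mul_mem h4R hεR) hapR)
  have hYm := hY (n - 1) ε (by omega) hm0
    (by rw [hm1]; exact R.mul_mem (R.mul_mem h4R hεR) hamR)
  have hCε : (HahnSeries.C ε : LaurentSeries (KSD n N)) * HahnSeries.C ε = 1 := by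
    rw [← map_mul, hεε, map_one]
  have hCεG := hC ε hεR
  rw [map_neg] at hYp
  generalize (HahnSeries.C ε : LaurentSeries (KSD n N)) = e at *
  clear_value t t'
  have hyG : ∀ l, l ≠ n → y l ∈ GR R := by
    intro l hl
    simp only [hy]
    split_ifs with h
    · refine mem_GR R _ (hreg l hl) ?_
      by_cases hl1 : l = n + 1
      · rw [hl1, hp0]; exact R.neg_mem hεR
      by_cases hl2 : l = n - 1
      · rw [hl2, hm0]; exact hεR
      rw [hoff l (by rw [le_abs]; omega)]
      exact R.mul_mem hεR (haR l (by omega) (by omega))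
    · exact (GR R).zero_mem
  refine Gam_good (GR R) n y hyG ?_ ?_ ?_ k hk N _ ?_
  · rw [hyn, hyp]
    have := (GR R).mul_mem hQ ((GR R).mul_mem hYp
      ((GR R).sub_mem hCεG (by simpa only [hyp] using hyG (n + 1) (by omega))))
    convert this using 1
    linear_combination (- x n) * hCε - (x n * (x (n + 1) + e) * (e - x (n + 1))) * htt
  · rw [hyn, hym]
    have := (GR R).mul_mem hQ ((GR R).mul_mem hYm
      ((GR R).add_mem hCεG (by simpa only [hym] using hyG (n - 1) (by omega))))
    convert (GR R).neg_mem this using 1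
    linear_combination (- x n) * hCε + (x n * (x (n - 1) - e) * (e + x (n - 1))) * htt
  · rw [hyn, hyp, hym]
    have := (GR R).mul_mem hQ ((GR R).add_mem hYp hYm)
    convert this using 1
    linear_combination - (x n * (x (n + 1) + x (n - 1))) * htt
  · intro i
    unfold utSD
    refine (GR R).add_mem (hC _ ?_) ?_
    · by_cases h : 1 ≤ i ∧ i ≤ N
      · exact hFR _ (Subfield.subset_closure ⟨i, h.1, h.2, rfl⟩)
      · unfold uvSD
        rw [dif_neg h]; exact R.zero_mem
    · split_ifs
      · rw [← htd]; exact ht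
      · exact (GR R).zero_mem
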